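/- Let ▷ be a strict linear order on a finite nonempty set X. For a choice function c on X the following are equivalent: (i) ▷ list rationalizes c; (ii) there is a competitive attention filter Γ relative to ▷ such that (Γ,▷) is an explanation by competitive limited attention of c. -/

import Mathlib

/-!
Reading a menu from its `rhd`-minimum up to its `rhd`-maximum, list rationality says that the
current winner is compared with each newly read alternative in turn.

For a list rational `c`, the filter is `Γ A = {y ∈ A | y = c A ∨ rhd (c A) y}`, the weak lower
contour set of the winner. Its maximum is `c A` by construction, and the maximum `y` of `A`
belongs to `Γ A` exactly when `c A = y`, which gives the competition property. The attention
filter property reduces to `choice_erase_of_above`: an alternative read after the eventual winner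
loses its comparison, so discarding it changes nothing.

Conversely, let `l` be the maximum of `A` and `x = c (A.erase l)`. The competition property says
that `l` is noticed in `A` if and only if it is noticed in `{x, l}`. If it is noticed, it is
chosen from both menus; otherwise it can be deleted from both, and `x` is chosen from both.
-/

open Finset

variable {X : Type*} [DecidableEq X]

/-- `a` is the `r`-greatest element among those satisfying `P`. -/
def IsRMax (r : X → X → Prop) (P : X → Prop) (a : X) : Prop :=
  P a ∧ ∀ y, P y → y ≠ a → r a y

/-- `a` is the `r`-least element among those satisfying `P`. -/
def IsRMin (r : X → X → Prop) (P : X → Prop) (a : X) : Prop :=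
  P a ∧ ∀ y, P y → y ≠ a → r y a

def Asym (r : X → X → Prop) : Prop := ∀ x y, r x y → ¬ r y x

def StrictPartial (r : X → X → Prop) : Prop :=
  Asym r ∧ ∀ x y z, r x y → r y z → r x z

def StrictLinear (r : X → X → Prop) : Prop :=
  StrictPartial r ∧ ∀ x y : X, x ≠ y → r x y ∨ r y x

/-- No cycle `x₁ ≻ x₂ ≻ … ≻ xₙ ≻ x₁` with `n ≥ 3`. -/
def Acyclic (r : X → X → Prop) : Prop :=
  ¬ ∃ (n : ℕ) (f : ℕ → X), 3 ≤ n ∧ (∀ i, i + 1 < n → r (f i) (f (i + 1))) ∧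
    r (f (n - 1)) (f 0)

def ChoiceFun (c : Finset X → X) : Prop :=
  ∀ A : Finset X, A.Nonempty → c A ∈ A

def ChoiceCorr (Γ : Finset X → Finset X) : Prop :=
  ∀ A : Finset X, A.Nonempty → (Γ A).Nonempty ∧ Γ A ⊆ A

/-- `x ∈ max(A, r)`: `x` is in `A` and is undominated in `A` w.r.t. `r`. -/
def MaxOf (r : X → X → Prop) (A : Finset X) (x : X) : Prop :=
  x ∈ A ∧ ∀ y ∈ A, ¬ r y x

/-- The pair `(gt, rhd)` describes `c` as a shortlisting. -/
def Describes (gt rhd : X → X → Prop) (c : Finset X → X) : Prop :=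
  StrictPartial gt ∧ StrictLinear rhd ∧
    ∀ A : Finset X, A.Nonempty → IsRMax rhd (MaxOf gt A) (c A)

def Shortlisting (c : Finset X → X) : Prop :=
  ∃ gt rhd : X → X → Prop, Describes gt rhd c

/-- Optimal attention filter. -/
def OptimalFilter (Γ : Finset X → Finset X) : Prop :=
  ChoiceCorr Γ ∧
  (∀ B : Finset X, B.Nonempty → ∀ x ∈ B, x ∉ Γ B → Γ (B.erase x) ⊆ Γ B) ∧
  (∀ B : Finset X, B.Nonempty → ∀ x ∈ B, ∀ y : X,
    y ∈ Γ {x, y} → y ∈ Γ (B.erase x) → y ∈ Γ B) ∧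
  (∀ B : Finset X, B.Nonempty → ∀ x ∈ B, (B.erase x).Nonempty →
    (Γ B).erase x ⊆ Γ (B.erase x))

/-- `(Γ, rhd)` is an explanation by optimal limited attention of `c`. -/
def ExplByOLA (Γ : Finset X → Finset X) (rhd : X → X → Prop) (c : Finset X → X) : Prop :=
  OptimalFilter Γ ∧ StrictLinear rhd ∧
    ∀ A : Finset X, A.Nonempty → IsRMax rhd (· ∈ Γ A) (c A)

/-- Choice with optimal limited attention. -/
def COLA (c : Finset X → X) : Prop :=
  ∃ (Γ : Finset X → Finset X) (rhd : X → X → Prop), ExplByOLA Γ rhd c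

/-- Salient attention filter relative to `rhd`. -/
def SalientFilter (rhd : X → X → Prop) (Γ : Finset X → Finset X) : Prop :=
  ChoiceCorr Γ ∧
  ∀ B : Finset X, B.Nonempty → ∀ x ∈ B,
    ¬ IsRMin rhd (· ∈ B) x → ¬ IsRMax rhd (· ∈ Γ B) x →
      (Γ B).erase x = Γ (B.erase x)

/-- `(Γ, rhd)` is an explanation by salient limited attention of `c`. -/
def ExplBySLA (Γ : Finset X → Finset X) (rhd : X → X → Prop) (c : Finset X → X) : Prop :=
  StrictLinear rhd ∧ SalientFilter rhd Γ ∧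
    ∀ A : Finset X, A.Nonempty → IsRMax rhd (· ∈ Γ A) (c A)

/-- Choice with salient limited attention. -/
def CSLA (c : Finset X → X) : Prop :=
  ∃ (Γ : Finset X → Finset X) (rhd : X → X → Prop), ExplBySLA Γ rhd c

/-- Selective salient attention filter relative to `rhd`. -/
def SelectiveFilter (rhd : X → X → Prop) (Γ : Finset X → Finset X) : Prop :=
  ChoiceCorr Γ ∧
  ∀ B : Finset X, B.Nonempty → ∀ x ∈ B,
    ¬ IsRMax rhd (· ∈ Γ B) x → (Γ B).erase x = Γ (B.erase x)

/-- Choice with selective salient limited attention. -/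
def CSSLA (c : Finset X → X) : Prop :=
  ∃ (Γ : Finset X → Finset X) (rhd : X → X → Prop),
    StrictLinear rhd ∧ SelectiveFilter rhd Γ ∧
      ∀ A : Finset X, A.Nonempty → IsRMax rhd (· ∈ Γ A) (c A)

def Rationalizable (c : Finset X → X) : Prop :=
  ∃ rhd : X → X → Prop, StrictLinear rhd ∧
    ∀ A : Finset X, A.Nonempty → IsRMax rhd (· ∈ A) (c A)

/-- Competitive attention filter relative to `rhd`. -/
def CompetitiveFilter (rhd : X → X → Prop) (Γ : Finset X → Finset X) : Prop :=
  ChoiceCorr Γ ∧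
  (∀ A : Finset X, A.Nonempty → ∀ x ∈ A, x ∉ Γ A → Γ A = Γ (A.erase x)) ∧
  (∀ A : Finset X, 1 < A.card → ∀ x y : X,
    IsRMax rhd (· ∈ A) y → IsRMax rhd (· ∈ Γ (A.erase y)) x →
      (y ∈ Γ {x, y} ↔ y ∈ Γ A))

/-- `(Γ, rhd)` is an explanation by competitive limited attention of `c`. -/
def ExplByCCLA (Γ : Finset X → Finset X) (rhd : X → X → Prop) (c : Finset X → X) : Prop :=
  StrictLinear rhd ∧ CompetitiveFilter rhd Γ ∧
    ∀ A : Finset X, A.Nonempty → IsRMax rhd (· ∈ Γ A) (c A)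

/-- Choice with competitive limited attention. -/
def CCLA (c : Finset X → X) : Prop :=
  ∃ (Γ : Finset X → Finset X) (rhd : X → X → Prop), ExplByCCLA Γ rhd c

/-- The list `f` list rationalizes `c`. -/
def ListRationalizes (f : X → X → Prop) (c : Finset X → X) : Prop :=
  StrictLinear f ∧
    ∀ A : Finset X, 1 < A.card → ∀ l : X, IsRMax f (· ∈ A) l →
      c A = c {c (A.erase l), l}

def ListRational (c : Finset X → X) : Prop :=
  ∃ f : X → X → Prop, ListRationalizes f c

/-- `(u, v, W)` is a general-temptation representation of `c`. -/
def GTRrep (c : Finset X → X) (u v : X → ℝ) (W : ℝ → ℝ → ℝ) : Prop :=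
  (∀ r s : ℝ, 0 ≤ W r s) ∧
  (∀ r₁ r₂ s : ℝ, r₁ < r₂ → W r₁ s < W r₂ s) ∧
  (∀ r s₁ s₂ : ℝ, s₁ < s₂ → W r s₁ < W r s₂) ∧
  ∀ (A : Finset X) (hA : A.Nonempty),
    c A ∈ A ∧ ∀ x ∈ A, x ≠ c A →
      W (u x) (v x - A.sup' hA v) < W (u (c A)) (v (c A) - A.sup' hA v)

def HasGTR (c : Finset X → X) : Prop :=
  ∃ (u v : X → ℝ) (W : ℝ → ℝ → ℝ), GTRrep c u v W

/-- `(gg, U)` is a conspicuity based endogenous reference representation of `c`. -/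
def CERrep (c : Finset X → X) (gg : X → X → Prop) (U : X → X → ℝ) : Prop :=
  StrictLinear gg ∧ (∀ z : X, Function.Injective (U z)) ∧
  ∀ A : Finset X, A.Nonempty → ∀ m : X, IsRMax gg (· ∈ A) m →
    c A ∈ A ∧ ∀ x ∈ A, x ≠ c A → U m x < U m (c A)

def HasCER (c : Finset X → X) : Prop :=
  ∃ (gg : X → X → Prop) (U : X → X → ℝ), CERrep c gg U

/-- `(A, B)` is a switch of `c`. -/
def Switch (c : Finset X → X) (A B : Finset X) : Prop :=
  A.Nonempty ∧ A ⊆ B ∧ c B ∈ A ∧ c A ≠ c B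

/-- Revealed salience: `x ⊨_c y`. -/
def RevSal (c : Finset X → X) (x y : X) : Prop :=
  ∃ A : Finset X, x ∈ A ∧ y ∈ A ∧ x ≠ c A ∧ c (A.erase x) ≠ c A

/-- Axiom of Revealed Temptation. -/
def ART (c : Finset X → X) : Prop :=
  ∀ B : Finset X, B.Nonempty → ∃ x ∈ B,
    ∀ B' B'' : Finset X, x ∈ B' → B' ⊂ B'' → B'' ⊆ B → ¬ Switch c B' B''

/-- The revealed relation `R^c`. -/
def Rrel (c : Finset X → X) (x y : X) : Prop :=
  (∃ A : Finset X, A.Nonempty ∧ x = c (insert y A) ∧ x ≠ c A) ∨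
  (∃ A : Finset X, A.Nonempty ∧ y = c (insert x A) ∧ x = c {x, y}) ∨
  (∃ A : Finset X, A.Nonempty ∧ y ≠ c (insert x A) ∧ y = c {x, y} ∧ y = c A)

/-- The revealed-to-follow relation `F_c`. -/
def Frel (c : Finset X → X) (x y : X) : Prop :=
  (∃ A : Finset X, A.Nonempty ∧ x = c (insert y A) ∧ y = c {x, y}) ∨
  (∃ A : Finset X, A.Nonempty ∧ x = c (insert y A) ∧ x ≠ c A) ∨
  (∃ A : Finset X, A.Nonempty ∧ x ≠ c (insert y A) ∧ x = c {x, y} ∧ x = c A)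

lemma exists_isRMax {r : X → X → Prop} (hr : StrictLinear r) (A : Finset X)
    (hA : A.Nonempty) : ∃ l, IsRMax r (· ∈ A) l := by
  obtain ⟨⟨_, htrans⟩, htot⟩ := hr
  induction hA using Finset.Nonempty.cons_induction with
  | singleton a => exact ⟨a, by simp, by simp +contextual⟩
  | cons a s ha hs ih =>
    obtain ⟨l, hl, hmax⟩ := ih
    have hal : a ≠ l := by rintro rfl; exact ha hl
    rcases htot a l hal with h | h
    · refine ⟨a, by simp, fun y hy hya => ?_⟩
      have hys : y ∈ s := by simpa [hya] using hy
      by_cases hyl : y = l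
      · rwa [hyl]
      · exact htrans _ _ _ h (hmax y hys hyl)
    · refine ⟨l, by simp [hl], fun y hy hyl => ?_⟩
      rcases Finset.mem_cons.1 hy with rfl | hys
      · exact h
      · exact hmax y hys hyl

lemma IsRMax.unique {r : X → X → Prop} (hr : StrictLinear r) {P : X → Prop} {a b : X}
    (ha : IsRMax r P a) (hb : IsRMax r P b) : a = b := by
  by_contra hne
  exact hr.1.1 _ _ (ha.2 b hb.1 (Ne.symm hne)) (hb.2 a ha.1 hne)

/-- Deleting an alternative that lies above the chosen one does not affect the choice. -/
lemma choice_erase_of_above {r : X → X → Prop} {c : Finset X → X} (hc : ChoiceFun c)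
    (h : ListRationalizes r c) (A : Finset X) :
    ∀ x ∈ A, r x (c A) → c (A.erase x) = c A := by
  obtain ⟨hr, hlist⟩ := h
  induction A using Finset.strongInduction with
  | H A ih =>
    intro x hx hxc
    have hcA : c A ∈ A := hc A ⟨x, hx⟩
    have hne : x ≠ c A := fun he => hr.1.1 _ _ hxc (by rw [← he] at hxc ⊢; exact hxc)
    have hcard : 1 < A.card := Finset.one_lt_card.2 ⟨x, hx, c A, hcA, hne⟩
    obtain ⟨l, hl⟩ := exists_isRMax hr A ⟨x, hx⟩
    have hlA : l ∈ A := hl.1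
    have hstep := hlist A hcard l hl
    have hcl : c A ≠ l := by
      intro he
      exact hr.1.1 _ _ hxc (he ▸ hl.2 x hx (he ▸ hne))
    -- The winner is not the last alternative, so it already won before the last comparison.
    have hprev : c A = c (A.erase l) := by
      have hm : c {c (A.erase l), l} ∈ ({c (A.erase l), l} : Finset X) := hc _ (by simp)
      rw [← hstep] at hm
      simpa [hcl] using hm
    by_cases hxl : x = l
    · rw [hxl, hprev]
    · have hrec : c ((A.erase l).erase x) = c (A.erase l) :=
        ih _ (Finset.erase_ssubset hlA) x (Finset.mem_erase.2 ⟨hxl, hx⟩) (hprev ▸ hxc)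
      have hlx : l ∈ A.erase x := Finset.mem_erase.2 ⟨Ne.symm hxl, hlA⟩
      have hcard' : 1 < (A.erase x).card :=
        Finset.one_lt_card.2 ⟨l, hlx, c A, Finset.mem_erase.2 ⟨Ne.symm hne, hcA⟩, Ne.symm hcl⟩
      have hmax' : IsRMax r (· ∈ A.erase x) l :=
        ⟨hlx, fun y hy => hl.2 y (Finset.mem_of_mem_erase hy)⟩
      rw [hlist _ hcard' l hmax', Finset.erase_right_comm, hrec, ← hstep]

open Classical in
/-- The part of the menu `A` lying weakly below the alternative chosen from `A`. -/
noncomputable def lowerFilter (r : X → X → Prop) (c : Finset X → X) (A : Finset X) : Finset X :=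
  A.filter (fun y => y = c A ∨ r (c A) y)

lemma mem_lowerFilter {r : X → X → Prop} {c : Finset X → X} {A : Finset X} {y : X} :
    y ∈ lowerFilter r c A ↔ y ∈ A ∧ (y = c A ∨ r (c A) y) := by
  simp [lowerFilter]

lemma isRMax_lowerFilter {r : X → X → Prop} {c : Finset X → X} (hc : ChoiceFun c)
    {A : Finset X} (hA : A.Nonempty) : IsRMax r (· ∈ lowerFilter r c A) (c A) :=
  ⟨mem_lowerFilter.2 ⟨hc A hA, Or.inl rfl⟩,
    fun _ hy hne => (mem_lowerFilter.1 hy).2.resolve_left hne⟩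

lemma isRMax_mem_lowerFilter_iff {r : X → X → Prop} (hr : StrictLinear r) {c : Finset X → X}
    (hc : ChoiceFun c) {A : Finset X} {y : X} (hy : IsRMax r (· ∈ A) y) :
    y ∈ lowerFilter r c A ↔ c A = y := by
  rw [mem_lowerFilter]
  constructor
  · rintro ⟨hyA, h | h⟩
    · exact h.symm
    · by_contra hne
      exact hr.1.1 _ _ h (hy.2 _ (hc A ⟨y, hyA⟩) hne)
  · intro h
    exact ⟨hy.1, Or.inl h.symm⟩

lemma competitiveFilter_lowerFilter {r : X → X → Prop} {c : Finset X → X} (hc : ChoiceFun c)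
    (h : ListRationalizes r c) : CompetitiveFilter r (lowerFilter r c) := by
  have hr := h.1
  refine ⟨fun A hA => ⟨⟨_, (isRMax_lowerFilter hc hA).1⟩, fun y hy => (mem_lowerFilter.1 hy).1⟩,
    fun A hA x hx hxΓ => ?_, fun A hcard x y hy hx => ?_⟩
  · rw [mem_lowerFilter] at hxΓ
    push Not at hxΓ
    obtain ⟨hne, hnr⟩ := hxΓ hx
    have he := choice_erase_of_above hc h A x hx ((hr.2 _ _ hne).resolve_right hnr)
    ext z
    simp only [mem_lowerFilter, he, Finset.mem_erase]
    constructor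
    · rintro ⟨hz, hz'⟩
      refine ⟨⟨?_, hz⟩, hz'⟩
      rintro rfl
      exact hz'.elim hne hnr
    · rintro ⟨⟨_, hz⟩, hz'⟩
      exact ⟨hz, hz'⟩
  · have hyA : y ∈ A := hy.1
    have hne : (A.erase y).Nonempty := by
      rw [← Finset.card_pos, Finset.card_erase_of_mem hyA]; omega
    obtain rfl : x = c (A.erase y) := hx.unique hr (isRMax_lowerFilter hc hne)
    have hmem := Finset.mem_erase.1 (hc _ hne)
    have hpair : IsRMax r (· ∈ ({c (A.erase y), y} : Finset X)) y := by
      refine ⟨by simp, fun z hz hzy => ?_⟩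
      obtain rfl : z = c (A.erase y) := by simpa [hzy] using hz
      exact hy.2 _ hmem.2 hzy
    rw [isRMax_mem_lowerFilter_iff hr hc hpair, isRMax_mem_lowerFilter_iff hr hc hy,
      h.2 A hcard y hy]

/-- If the top alternative `l` of a menu is noticed, it is chosen; otherwise the choice is the
one made without `l`. -/
lemma ExplByCCLA.choice_eq {Γ : Finset X → Finset X} {r : X → X → Prop} {c : Finset X → X}
    (h : ExplByCCLA Γ r c) {A : Finset X} {l : X} (hl : IsRMax r (· ∈ A) l) :
    (l ∈ Γ A → c A = l) ∧ (l ∉ Γ A → c A = c (A.erase l)) := by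
  obtain ⟨hr, ⟨hcorr, hatt, -⟩, hexp⟩ := h
  have hlA : l ∈ A := hl.1
  have hA : A.Nonempty := ⟨l, hlA⟩
  obtain ⟨hΓne, hsub⟩ := hcorr A hA
  refine ⟨fun hmem => (hexp A hA).unique hr ⟨hmem, fun y hy => hl.2 y (hsub hy)⟩,
    fun hmem => ?_⟩
  -- Some other alternative is noticed, so `A.erase l` is a menu.
  have hne : (A.erase l).Nonempty := by
    obtain ⟨z, hz⟩ := hΓne
    exact ⟨z, Finset.mem_erase.2 ⟨fun he => hmem (he ▸ hz), hsub hz⟩⟩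
  have hmax := hexp A hA
  rw [hatt A hA l hlA hmem] at hmax
  exact hmax.unique hr (hexp _ hne)

lemma ExplByCCLA.listRationalizes {Γ : Finset X → Finset X} {r : X → X → Prop}
    {c : Finset X → X} (hc : ChoiceFun c) (h : ExplByCCLA Γ r c) : ListRationalizes r c := by
  refine ⟨h.1, fun A hcard l hl => ?_⟩
  have hlA : l ∈ A := hl.1
  have hne : (A.erase l).Nonempty := by
    rw [← Finset.card_pos, Finset.card_erase_of_mem hlA]; omega
  have hmem := Finset.mem_erase.1 (hc _ hne)
  have hpair : IsRMax r (· ∈ ({c (A.erase l), l} : Finset X)) l := by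
    refine ⟨by simp, fun z hz hzl => ?_⟩
    obtain rfl : z = c (A.erase l) := by simpa [hzl] using hz
    exact hl.2 _ hmem.2 hzl
  have hiff := h.2.1.2.2 A hcard _ l hl (h.2.2 _ hne)
  by_cases hΓ : l ∈ Γ A
  · rw [(h.choice_eq hl).1 hΓ, (h.choice_eq hpair).1 (hiff.2 hΓ)]
  · have herase : ({c (A.erase l), l} : Finset X).erase l = {c (A.erase l)} := by
      ext z
      simp only [Finset.mem_erase, Finset.mem_insert, Finset.mem_singleton]
      constructor
      · rintro ⟨hz, hz'⟩
        exact hz'.resolve_right hz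
      · rintro rfl
        exact ⟨hmem.1, Or.inl rfl⟩
    have hsing : c {c (A.erase l)} = c (A.erase l) := by
      simpa using hc {c (A.erase l)} (by simp)
    rw [(h.choice_eq hl).2 hΓ, (h.choice_eq hpair).2 (fun hm => hΓ (hiff.1 hm)), herase, hsing]

theorem stmt_14 [Fintype X] [Nonempty X] (rhd : X → X → Prop) (hrhd : StrictLinear rhd)
    (c : Finset X → X) (hc : ChoiceFun c) :
    ListRationalizes rhd c ↔
      ∃ Γ : Finset X → Finset X, ExplByCCLA Γ rhd c := by
  constructor
  · intro h
    exact ⟨lowerFilter rhd c, hrhd, competitiveFilter_lowerFilter hc h,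
      fun A hA => isRMax_lowerFilter hc hA⟩
  · rintro ⟨Γ, h⟩
    exact h.listRationalizes hc
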